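/- For every ε > 0 there exists a constant C > 0 such that the following holds. If p = p(n) satisfies (1+ε) log n / n ≤ p(n) ≤ 1 − ε for all n, then the probability that a random graph G ∈ G(n,p(n)) is connected and satisfies AC(G) ≤ C log n / p(n) tends to 1 as n → ∞. -/

import Mathlib

/-!
Write the random graph as a union of three independent ones, where the first and the third have
edge probability a small multiple of `p`, and the second almost `p`.

In the first, with high probability, there is an edge between any two disjoint sets of `k` vertices,
for some `k` linear in `n`, so depth-first search finds a path missing at most `2 * k` vertices. In
the second, the vertices off this path are joined one by one to vertices of the path that lie in
distinct blocks of two consecutive vertices. At every step at least `M` vertices of the path lie in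
unused blocks, so this fails with probability at most `n * (1 - q) ^ M`, where `q` is the second
edge probability and `q * M` exceeds `log n` by a constant factor.

Odd-even transposition makes the agents on the path travel back and forth along it. In `4 * K`
rounds two of them occupy at least `K` different pairs of vertices, and one of these pairs is likely
to be an edge of the third graph when `K` is a large multiple of `log n / p`. Should `4 * K` exceed
the length of the path, the two meet on the path itself.

This strategy is run three times, each run being undone before the next. Before the second run, the
agents off the path change places with one agent of their block, and before the third run with the
other one. Every agent is then on the path in two of the three runs, hence any two agents are on it
together in one of them.
-/

open scoped Classical

/-- A permutation of the vertices arising from swapping the agents along the edges of a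
matching in `G`: every vertex is fixed, or is swapped with a neighbour. -/
def IsMatchingSwap {V : Type*} (G : SimpleGraph V) (σ : Equiv.Perm V) : Prop :=
  ∀ v : V, σ v = v ∨ (G.Adj v (σ v) ∧ σ (σ v) = v)

/-- `positions σ i a` is the vertex occupied after `i` rounds by the agent that initially
occupies vertex `a`, when round `j` rearranges agents by the permutation `σ j`. -/
def positions {V : Type*} (σ : ℕ → Equiv.Perm V) : ℕ → V → V
  | 0 => id
  | (i + 1) => (σ i) ∘ positions σ i

/-- The agents starting at `a` and `b` become acquainted within the first `t` rounds:
at some time `i ≤ t` they occupy adjacent vertices of `G`. -/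
def Acquainted {V : Type*} (G : SimpleGraph V) (σ : ℕ → Equiv.Perm V) (t : ℕ) (a b : V) : Prop :=
  ∃ i ≤ t, G.Adj (positions σ i a) (positions σ i b)

/-- The acquaintance time `AC G`: the least number `t` of rounds for which there is a
strategy (a sequence of matchings, one per round, whose swaps move the agents) after which
every pair of distinct agents is acquainted. -/
noncomputable def AC {V : Type*} (G : SimpleGraph V) : ℕ :=
  sInf {t | ∃ σ : ℕ → Equiv.Perm V, (∀ i < t, IsMatchingSwap G (σ i)) ∧
    ∀ a b : V, a ≠ b → Acquainted G σ t a b}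

/-- The helicopter acquaintance time `bAC G`: as `AC G`, but each round may rearrange the
agents by an arbitrary permutation of the vertices. -/
noncomputable def bAC {V : Type*} (G : SimpleGraph V) : ℕ :=
  sInf {t | ∃ σ : ℕ → Equiv.Perm V, ∀ a b : V, a ≠ b → Acquainted G σ t a b}

/-- The probability, under the binomial random graph model `G(n,p)` on vertex set
`{1, …, n}`, of the event `A`. -/
noncomputable def gnpProb (n : ℕ) (p : ℝ) (A : SimpleGraph (Fin n) → Prop) : ℝ :=
  ∑ G : SimpleGraph (Fin n),
    if A G then p ^ G.edgeSet.ncard * (1 - p) ^ (n.choose 2 - G.edgeSet.ncard) else 0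

open SimpleGraph

/-! ### Strategies -/

section Strategies

variable {V : Type*} {G : SimpleGraph V}

/-- Acquaintance of the agents starting at `a` and `b` in the course of a finite list of rounds.
The latest round comes first, so that the product of a suffix of `L` sends each agent from its
starting vertex to its position after the rounds of this suffix. -/
def AcquaintedAlong (G : SimpleGraph V) (L : List (Equiv.Perm V)) (a b : V) : Prop :=
  ∃ L', L' <:+ L ∧ G.Adj (L'.prod a) (L'.prod b)

/-- There is a strategy for `G` of exactly `t` rounds. -/
def AcquaintableIn (G : SimpleGraph V) (t : ℕ) : Prop :=
  ∃ L : List (Equiv.Perm V), L.length = t ∧ (∀ σ ∈ L, IsMatchingSwap G σ) ∧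
    ∀ a b, a ≠ b → AcquaintedAlong G L a b

namespace AcquaintedAlong

variable {L L' : List (Equiv.Perm V)} {a b : V}

theorem mono {H : SimpleGraph V} (hGH : G ≤ H) (h : AcquaintedAlong G L a b) :
    AcquaintedAlong H L a b :=
  let ⟨M, hM, hadj⟩ := h
  ⟨M, hM, hGH hadj⟩

theorem append_left (h : AcquaintedAlong G L a b) (L' : List (Equiv.Perm V)) :
    AcquaintedAlong G (L' ++ L) a b :=
  let ⟨M, hM, hadj⟩ := h
  ⟨M, hM.trans (L'.suffix_append L), hadj⟩

theorem append_right (h : AcquaintedAlong G L' (L.prod a) (L.prod b)) :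
    AcquaintedAlong G (L' ++ L) a b := by
  obtain ⟨M, ⟨N, rfl⟩, hadj⟩ := h
  exact ⟨M ++ L, ⟨N, by simp⟩, by simpa using hadj⟩

end AcquaintedAlong

theorem IsMatchingSwap.apply_apply {σ : Equiv.Perm V} (hσ : IsMatchingSwap G σ) (v : V) :
    σ (σ v) = v := by
  rcases hσ v with h | ⟨-, h⟩
  · rw [h, h]
  · exact h

theorem reverse_prod_eq_inv {L : List (Equiv.Perm V)} (hL : ∀ σ ∈ L, IsMatchingSwap G σ) :
    L.reverse.prod = L.prod⁻¹ := by
  have hinv : L.map (·⁻¹) = L := (List.map_congr_left fun σ hσ => Equiv.ext fun v =>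
    Equiv.Perm.inv_eq_iff_eq.2 ((hL σ hσ).apply_apply v).symm).trans L.map_id
  rw [List.prod_inv_reverse, hinv]

theorem reachable_prod_apply {L : List (Equiv.Perm V)} (hL : ∀ σ ∈ L, IsMatchingSwap G σ) (a : V) :
    G.Reachable a (L.prod a) := by
  induction L with
  | nil => rfl
  | cons σ L ih =>
    refine (ih fun τ hτ => hL τ (.tail σ hτ)).trans ?_
    rcases hL σ List.mem_cons_self (L.prod a) with h | ⟨h, -⟩
    · simp [h]
    · simpa using h.reachable

theorem positions_getD_reverse (L L' : List (Equiv.Perm V)) :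
    positions (fun i => (L ++ L').reverse.getD i 1) L'.length = L'.prod := by
  induction L' generalizing L with
  | nil => rfl
  | cons σ L' ih =>
    have h := ih (L ++ [σ])
    rw [List.append_assoc, List.singleton_append] at h
    rw [List.length_cons, positions, h]
    ext v
    simp

namespace AcquaintableIn

variable {t : ℕ}

theorem AC_le (h : AcquaintableIn G t) : AC G ≤ t := by
  obtain ⟨L, rfl, hL, hacq⟩ := h
  refine Nat.sInf_le ⟨fun i => L.reverse.getD i 1, fun i hi => hL _ ?_, fun a b hab => ?_⟩
  · simp [hi]
  · obtain ⟨L', ⟨M, rfl⟩, hadj⟩ := hacq a b hab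
    exact ⟨L'.length, by simp, by simpa only [positions_getD_reverse] using hadj⟩

theorem connected [Nonempty V] (h : AcquaintableIn G t) : G.Connected := by
  obtain ⟨L, -, hL, hacq⟩ := h
  refine ⟨fun a b => ?_⟩
  rcases eq_or_ne a b with rfl | hab
  · rfl
  obtain ⟨L', hL', hadj⟩ := hacq a b hab
  have hsub : ∀ σ ∈ L', IsMatchingSwap G σ := fun σ hσ => hL σ (hL'.subset hσ)
  exact (reachable_prod_apply hsub a).trans
    (hadj.reachable.trans (reachable_prod_apply hsub b).symm)

end AcquaintableIn

section Embedding

variable {ι : Type*} (π : ι ↪ V)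

theorem IsMatchingSwap.viaEmbedding {σ : Equiv.Perm ι} (hσ : IsMatchingSwap (G.comap π) σ) :
    IsMatchingSwap G (σ.viaEmbedding π) := by
  intro v
  by_cases hv : v ∈ Set.range π
  · obtain ⟨i, rfl⟩ := hv
    simpa [Equiv.Perm.viaEmbedding_apply] using hσ i
  · exact .inl (σ.viaEmbedding_apply_of_notMem π v hv)

theorem forall_mem_map_viaEmbeddingHom {L : List (Equiv.Perm ι)}
    (hL : ∀ σ ∈ L, IsMatchingSwap (G.comap π) σ) :
    ∀ σ ∈ L.map (Equiv.Perm.viaEmbeddingHom π), IsMatchingSwap G σ :=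
  List.forall_mem_map.2 fun σ hσ => (hL σ hσ).viaEmbedding π

theorem AcquaintedAlong.viaEmbedding {L : List (Equiv.Perm ι)} {i j : ι}
    (h : AcquaintedAlong (G.comap π) L i j) :
    AcquaintedAlong G (L.map (Equiv.Perm.viaEmbeddingHom π)) (π i) (π j) := by
  obtain ⟨L', hL', hadj⟩ := h
  refine ⟨_, hL'.map _, ?_⟩
  rw [← map_list_prod, Equiv.Perm.viaEmbeddingHom_apply]
  simpa [Equiv.Perm.viaEmbedding_apply] using hadj

/-- The involution swapping the two copies of `ι` inside `V`. -/
noncomputable def swapAlong (e : ι ⊕ ι ↪ V) : Equiv.Perm V :=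
  Equiv.Perm.viaEmbedding (Equiv.sumComm ι ι) e

variable {e : ι ⊕ ι ↪ V}

theorem isMatchingSwap_swapAlong (h : ∀ i, G.Adj (e (.inl i)) (e (.inr i))) :
    IsMatchingSwap G (swapAlong e) :=
  IsMatchingSwap.viaEmbedding e fun x => .inr (by cases x <;> simp [h, (h _).symm])

theorem swapAlong_inl (i : ι) : swapAlong e (e (.inl i)) = e (.inr i) :=
  Equiv.Perm.viaEmbedding_apply _ e _

theorem swapAlong_of_notMem {v : V} (hv : v ∉ Set.range e) : swapAlong e v = v :=
  Equiv.Perm.viaEmbedding_apply_of_notMem _ e v hv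

theorem swapAlong_swapAlong (e : ι ⊕ ι ↪ V) (v : V) : swapAlong e (swapAlong e v) = v :=
  (isMatchingSwap_swapAlong (G := ⊤) fun i => by simp).apply_apply v

end Embedding

theorem acquaintableIn_of_forall_two_phases {P : List (Equiv.Perm V)} {S : Set V}
    {σ τ : Equiv.Perm V} (hP : ∀ ρ ∈ P, IsMatchingSwap G ρ) (hσ : IsMatchingSwap G σ)
    (hτ : IsMatchingSwap G τ) (hacq : ∀ a ∈ S, ∀ b ∈ S, a ≠ b → AcquaintedAlong G P a b)
    (hS : ∀ v, (v ∈ S ∨ σ v ∈ S) ∧ (v ∈ S ∨ σ (τ (σ v)) ∈ S) ∧ (σ v ∈ S ∨ σ (τ (σ v)) ∈ S)) :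
    AcquaintableIn G (5 * P.length + 3) := by
  -- `P.reverse` undoes `P`, so the second and third runs of `P` start from `σ` and `σ * τ * σ`.
  set L₂ := [σ] ++ (P.reverse ++ P) with hL₂
  set L₃ := [σ, τ] ++ (P.reverse ++ (P ++ L₂)) with hL₃
  have hprod₂ : L₂.prod = σ := by simp [hL₂, reverse_prod_eq_inv hP]
  have hprod₃ : L₃.prod = σ * τ * σ := by
    rw [hL₃, List.prod_append, List.prod_append, List.prod_append, hprod₂, reverse_prod_eq_inv hP]
    simp [mul_assoc]
  refine ⟨P ++ L₃, ?_, ?_, fun a b hab => ?_⟩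
  · simp only [hL₂, hL₃, List.length_append, List.length_cons, List.length_nil, List.length_reverse]
    omega
  · simp_all [or_imp]
  have h₁ (ha : a ∈ S) (hb : b ∈ S) : AcquaintedAlong G (P ++ L₃) a b :=
    (((((hacq a ha b hb hab).append_left P.reverse).append_left [σ]).append_left P).append_left
      P.reverse).append_left [σ, τ] |>.append_left P
  have h₂ (ha : σ a ∈ S) (hb : σ b ∈ S) : AcquaintedAlong G (P ++ L₃) a b := by
    rw [← hprod₂] at ha hb
    exact ((((hacq _ ha _ hb (L₂.prod.injective.ne hab)).append_right.append_left
      P.reverse).append_left [σ, τ]).append_left P)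
  have h₃ (ha : σ (τ (σ a)) ∈ S) (hb : σ (τ (σ b)) ∈ S) : AcquaintedAlong G (P ++ L₃) a b := by
    have hprod (v) : L₃.prod v = σ (τ (σ v)) := by rw [hprod₃]; rfl
    rw [← hprod] at ha hb
    exact (hacq _ ha _ hb (L₃.prod.injective.ne hab)).append_right
  -- `a` and `b` are each in `S` at the start of two of the three runs, hence together in one.
  have ha := hS a
  have hb := hS b
  tauto

section ThreePhases

variable {ι : Type*} {π : ι ↪ V} {e : ↥(Set.range π)ᶜ ⊕ ↥(Set.range π)ᶜ ↪ ι}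

/-- The pairs `r`, `π (e (.inl r))` as an embedding; together with the pairs `π (e (.inl r))`,
`π (e (.inr r))`, they attach two vertices of the image of `π` to every vertex `r` outside. -/
def attachEmbedding (π : ι ↪ V) (e : ↥(Set.range π)ᶜ ⊕ ↥(Set.range π)ᶜ ↪ ι) :
    ↥(Set.range π)ᶜ ⊕ ↥(Set.range π)ᶜ ↪ V where
  toFun := Sum.elim (↑) fun r => π (e (.inl r))
  inj' := Subtype.val_injective.sumElim (π.injective.comp (e.injective.comp Sum.inl_injective))
    fun r _ h => r.2 ⟨_, h.symm⟩

/-- The round bringing the agents off the path onto it. -/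
noncomputable def entrySwap (π : ι ↪ V) (e : ↥(Set.range π)ᶜ ⊕ ↥(Set.range π)ᶜ ↪ ι) :
    Equiv.Perm V :=
  swapAlong (attachEmbedding π e)

/-- The round exchanging the two attached vertices of every vertex off the path. -/
noncomputable def exchangeSwap (π : ι ↪ V) (e : ↥(Set.range π)ᶜ ⊕ ↥(Set.range π)ᶜ ↪ ι) :
    Equiv.Perm V :=
  swapAlong (e.trans π)

theorem exists_eq_of_entrySwap_notMem {v : V} (hv : entrySwap π e v ∉ Set.range π) :
    ∃ r, v = π (e (.inl r)) :=
  ⟨⟨_, hv⟩, (swapAlong_swapAlong (attachEmbedding π e) v).symm.trans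
    (swapAlong_inl (e := attachEmbedding π e) ⟨_, hv⟩)⟩

theorem entrySwap_inr (r : ↥(Set.range π)ᶜ) :
    entrySwap π e (π (e (.inr r))) = π (e (.inr r)) := by
  refine swapAlong_of_notMem ?_
  rintro ⟨s | s, hs⟩
  · exact s.2 ⟨_, hs.symm⟩
  · simp [attachEmbedding] at hs

theorem exists_eq_of_entrySwap_exchangeSwap_entrySwap_notMem {v : V}
    (hv : entrySwap π e (exchangeSwap π e (entrySwap π e v)) ∉ Set.range π) :
    ∃ r, v = π (e (.inr r)) := by
  obtain ⟨r, hr⟩ := exists_eq_of_entrySwap_notMem hv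
  refine ⟨r, ?_⟩
  have h : entrySwap π e v = π (e (.inr r)) := by
    rw [← swapAlong_swapAlong (e.trans π) (entrySwap π e v)]
    exact (congrArg _ hr).trans (swapAlong_inl (e := e.trans π) r)
  rw [← swapAlong_swapAlong (attachEmbedding π e) v]
  exact (congrArg (entrySwap π e) h).trans (entrySwap_inr r)

theorem mem_range_in_two_phases (π : ι ↪ V) (e : ↥(Set.range π)ᶜ ⊕ ↥(Set.range π)ᶜ ↪ ι) (v : V) :
    (v ∈ Set.range π ∨ entrySwap π e v ∈ Set.range π) ∧
    (v ∈ Set.range π ∨ entrySwap π e (exchangeSwap π e (entrySwap π e v)) ∈ Set.range π) ∧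
    (entrySwap π e v ∈ Set.range π ∨
      entrySwap π e (exchangeSwap π e (entrySwap π e v)) ∈ Set.range π) := by
  refine ⟨?_, ?_, ?_⟩ <;> by_contra! ⟨h, h'⟩
  · obtain ⟨r, rfl⟩ := exists_eq_of_entrySwap_notMem h'
    exact h ⟨_, rfl⟩
  · obtain ⟨r, rfl⟩ := exists_eq_of_entrySwap_exchangeSwap_entrySwap_notMem h'
    exact h ⟨_, rfl⟩
  · obtain ⟨r, rfl⟩ := exists_eq_of_entrySwap_notMem h
    obtain ⟨s, hs⟩ := exists_eq_of_entrySwap_exchangeSwap_entrySwap_notMem h'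
    simp at hs

theorem acquaintableIn_of_path {L : List (Equiv.Perm ι)}
    (hL : ∀ σ ∈ L, IsMatchingSwap (G.comap π) σ)
    (hacq : ∀ i j, i ≠ j → AcquaintedAlong (G.comap π) L i j)
    (hadj : ∀ r : ↥(Set.range π)ᶜ, G.Adj r (π (e (.inl r))))
    (hadj' : ∀ r, G.Adj (π (e (.inl r))) (π (e (.inr r)))) :
    AcquaintableIn G (5 * L.length + 3) := by
  rw [← L.length_map (Equiv.Perm.viaEmbeddingHom π)]
  refine acquaintableIn_of_forall_two_phases (S := Set.range π)
    (forall_mem_map_viaEmbeddingHom π hL) (isMatchingSwap_swapAlong hadj)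
    (isMatchingSwap_swapAlong hadj') ?_ (mem_range_in_two_phases π e)
  rintro _ ⟨i, rfl⟩ _ ⟨j, rfl⟩ hij
  exact (hacq i j (ne_of_apply_ne π hij)).viaEmbedding π

end ThreePhases

end Strategies

/-! ### Odd-even transposition along a path -/

section OddEven

/-- The partner of the position `i` of a path with `m` vertices in the round `t` of the odd-even
transposition strategy, which swaps `i` and `i + 1` whenever `i + t` is even. -/
def oddEvenPartner (m t i : ℕ) : ℕ :=
  if (i + t) % 2 = 0 then (if i + 1 < m then i + 1 else i) else i - 1

/-- The closed walk `0, 1, …, m - 1, m - 1, …, 1, 0` along a path with `m` vertices, extended to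
period `2 * m`; every agent follows it under odd-even transposition. -/
def zigzag (m x : ℕ) : ℕ :=
  if x % (2 * m) < m then x % (2 * m) else 2 * m - 1 - x % (2 * m)

/-- The time at which `zigzag m` visits `i`, chosen even so as to agree with the direction in which
odd-even transposition first moves the agent at `i`. -/
def zigzagPhase (m i : ℕ) : ℕ :=
  if i % 2 = 0 then i else 2 * m - 1 - i

variable {m i t T x : ℕ}

theorem oddEvenPartner_lt (h : i < m) : oddEvenPartner m t i < m := by
  unfold oddEvenPartner
  split_ifs <;> omega

theorem oddEvenPartner_oddEvenPartner (h : i < m) :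
    oddEvenPartner m t (oddEvenPartner m t i) = i := by
  unfold oddEvenPartner
  split_ifs <;> omega

theorem zigzagPhase_mod_two (m i : ℕ) : zigzagPhase m i % 2 = 0 := by
  unfold zigzagPhase
  split_ifs <;> omega

theorem zigzagPhase_lt (h : i < m) : zigzagPhase m i < 2 * m := by
  unfold zigzagPhase
  split_ifs <;> omega

theorem zigzag_zigzagPhase (h : i < m) : zigzag m (zigzagPhase m i) = i := by
  rw [zigzag, Nat.mod_eq_of_lt (zigzagPhase_lt h), zigzagPhase]
  split_ifs <;> omega

theorem oddEvenPartner_zigzag (hm : 0 < m) (hx : x % 2 = 0) :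
    oddEvenPartner m t (zigzag m (x + t)) = zigzag m (x + t + 1) := by
  have hlt := Nat.mod_lt (x + t) (by omega : 0 < 2 * m)
  have hparity : (x + t) % (2 * m) % 2 = (x + t) % 2 := Nat.mod_mod_of_dvd _ (Dvd.intro _ rfl)
  have hsucc : (x + t + 1) % (2 * m) =
      if (x + t) % (2 * m) + 1 = 2 * m then 0 else (x + t) % (2 * m) + 1 := by
    rw [← Nat.mod_add_mod]
    split_ifs with h
    · rw [h, Nat.mod_self]
    · exact Nat.mod_eq_of_lt (by omega)
  unfold zigzag
  rw [hsucc]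
  generalize (x + t) % (2 * m) = r at *
  unfold oddEvenPartner
  split_ifs <;> omega

theorem exists_zigzag_adjacent {x y : ℕ} (hx : x % 2 = 0) (hy : y % 2 = 0) (hxy : x < y)
    (hym : y < 2 * m) :
    ∃ t ≤ m, zigzag m (x + t) + 1 = zigzag m (y + t) ∨ zigzag m (y + t) + 1 = zigzag m (x + t) := by
  -- The agents meet when the midpoint of `x + t` and `y + t` is a turning point of the walk.
  by_cases h : (x + y) / 2 ≤ m
  · refine ⟨m - (x + y) / 2, by omega, ?_⟩
    unfold zigzag
    rw [Nat.mod_eq_of_lt (by omega : x + (m - (x + y) / 2) < 2 * m),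
      Nat.mod_eq_of_lt (by omega : y + (m - (x + y) / 2) < 2 * m)]
    split_ifs <;> omega
  · refine ⟨2 * m - (x + y) / 2, by omega, ?_⟩
    have hmod : (y + (2 * m - (x + y) / 2)) % (2 * m) = y - (x + y) / 2 := by
      rw [show y + (2 * m - (x + y) / 2) = y - (x + y) / 2 + 2 * m by omega, Nat.add_mod_right,
        Nat.mod_eq_of_lt (by omega)]
    unfold zigzag
    rw [hmod, Nat.mod_eq_of_lt (by omega : x + (2 * m - (x + y) / 2) < 2 * m)]
    split_ifs <;> omega

theorem card_filter_zigzag_eq_le (x a : ℕ) (hT : T ≤ 2 * m) :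
    ((Finset.range T).filter fun t => zigzag m (x + t) = a).card ≤ 2 := by
  have hsub : ((Finset.range T).filter fun t => zigzag m (x + t) = a).image
      (fun t => (x + t) % (2 * m)) ⊆ {a, 2 * m - 1 - a} := by
    simp only [Finset.subset_iff, Finset.mem_image, Finset.mem_filter, Finset.mem_range,
      Finset.mem_insert, Finset.mem_singleton]
    rintro _ ⟨t, ⟨ht, rfl⟩, rfl⟩
    have := Nat.mod_lt (x + t) (by omega : 0 < 2 * m)
    unfold zigzag
    split_ifs <;> omega
  have hcard := (Finset.card_le_card hsub).trans Finset.card_le_two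
  rwa [Finset.card_image_of_injOn fun t ht t' ht' h => ?_] at hcard
  have ht : t < T := Finset.mem_range.1 (Finset.mem_filter.1 ht).1
  have ht' : t' < T := Finset.mem_range.1 (Finset.mem_filter.1 ht').1
  exact (Nat.ModEq.add_left_cancel' x h).eq_of_lt_of_lt (by omega) (by omega)

/-- The round `t` of the odd-even transposition strategy. -/
def oddEvenSwap (m t : ℕ) : Equiv.Perm (Fin m) :=
  Function.Involutive.toPerm (fun i => ⟨oddEvenPartner m t i, oddEvenPartner_lt i.2⟩)
    fun i => Fin.ext (oddEvenPartner_oddEvenPartner i.2)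

/-- The rounds `0, …, t - 1` of the odd-even transposition strategy, the latest coming first. -/
def oddEvenRounds (m : ℕ) : ℕ → List (Equiv.Perm (Fin m))
  | 0 => []
  | t + 1 => oddEvenSwap m t :: oddEvenRounds m t

theorem isMatchingSwap_oddEvenSwap {H : SimpleGraph (Fin m)} (hH : pathGraph m ≤ H) (t : ℕ) :
    IsMatchingSwap H (oddEvenSwap m t) := by
  intro i
  rw [or_iff_not_imp_left]
  refine fun hi => ⟨hH (pathGraph_adj.2 ?_), Function.Involutive.toPerm_involutive _ i⟩
  replace hi : oddEvenPartner m t i ≠ i := fun h => hi (Fin.ext h)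
  change i + 1 = oddEvenPartner m t i ∨ oddEvenPartner m t i + 1 = i
  unfold oddEvenPartner at *
  split_ifs at * <;> omega

theorem length_oddEvenRounds (m t : ℕ) : (oddEvenRounds m t).length = t := by
  induction t with
  | zero => rfl
  | succ t ih => rw [oddEvenRounds, List.length_cons, ih]

theorem forall_mem_oddEvenRounds {H : SimpleGraph (Fin m)} (hH : pathGraph m ≤ H) (t : ℕ) :
    ∀ σ ∈ oddEvenRounds m t, IsMatchingSwap H σ := by
  induction t with
  | zero => simp [oddEvenRounds]
  | succ t ih => exact List.forall_mem_cons.2 ⟨isMatchingSwap_oddEvenSwap hH t, ih⟩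

theorem oddEvenRounds_suffix (m : ℕ) (h : t ≤ T) : oddEvenRounds m t <:+ oddEvenRounds m T := by
  induction T, h using Nat.le_induction with
  | base => exact List.suffix_rfl
  | succ T _ ih => exact ih.trans (List.suffix_cons _ _)

theorem oddEvenRounds_prod_apply (t : ℕ) (i : Fin m) :
    ((oddEvenRounds m t).prod i : ℕ) = zigzag m (zigzagPhase m i + t) := by
  induction t with
  | zero => exact (zigzag_zigzagPhase i.2).symm
  | succ t ih =>
    rw [← add_assoc, ← oddEvenPartner_zigzag i.pos (zigzagPhase_mod_two m i), ← ih]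
    rfl

theorem acquaintedAlong_oddEvenRounds {H : SimpleGraph (Fin m)} (hH : pathGraph m ≤ H)
    (hT : m ≤ T) {i j : Fin m} (hij : i ≠ j) : AcquaintedAlong H (oddEvenRounds m T) i j := by
  have hne : zigzagPhase m i ≠ zigzagPhase m j := fun h =>
    hij (Fin.ext (by rw [← zigzag_zigzagPhase i.2, h, zigzag_zigzagPhase j.2]))
  obtain ⟨t, ht, hadj⟩ : ∃ t ≤ m, (pathGraph m).Adj ((oddEvenRounds m t).prod i)
      ((oddEvenRounds m t).prod j) := by
    simp only [pathGraph_adj, oddEvenRounds_prod_apply]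
    rcases hne.lt_or_gt with h | h
    · exact exists_zigzag_adjacent (zigzagPhase_mod_two m i) (zigzagPhase_mod_two m j) h
        (zigzagPhase_lt j.2)
    · simpa only [or_comm] using exists_zigzag_adjacent (zigzagPhase_mod_two m j)
        (zigzagPhase_mod_two m i) h (zigzagPhase_lt i.2)
  exact ⟨_, oddEvenRounds_suffix m (ht.trans hT), hH hadj⟩

theorem le_four_mul_card_image_oddEvenRounds_prod (hT : T ≤ 2 * m) (i j : Fin m) :
    T ≤ 4 * ((Finset.range T).image fun t =>
      s((oddEvenRounds m t).prod i, (oddEvenRounds m t).prod j)).card := by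
  have hvisits (i a : Fin m) :
      ((Finset.range T).filter fun t => (oddEvenRounds m t).prod i = a).card ≤ 2 := by
    simp only [Fin.ext_iff, oddEvenRounds_prod_apply]
    exact card_filter_zigzag_eq_le _ _ hT
  have hfiber : ∀ z : Sym2 (Fin m), ((Finset.range T).filter fun t =>
      s((oddEvenRounds m t).prod i, (oddEvenRounds m t).prod j) = z).card ≤ 4 := by
    refine Sym2.ind fun a b => le_trans ?_ (add_le_add (hvisits i a) (hvisits i b))
    refine (Finset.card_le_card fun t ht => ?_).trans (Finset.card_union_le _ _)
    simp only [Finset.mem_filter, Finset.mem_union, Sym2.eq_iff] at ht ⊢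
    tauto
  simpa using Finset.card_le_mul_card_image (s := Finset.range T) 4 fun z _ => hfiber z

end OddEven

/-! ### Long paths -/

section LongPath

variable {V : Type*}

/-- A graph is `k`-joined if there is an edge between any two disjoint sets of `k` vertices. -/
def IsJoined (G : SimpleGraph V) (k : ℕ) : Prop :=
  ∀ A B : Finset V, Disjoint A B → A.card = k → B.card = k → ∃ a ∈ A, ∃ b ∈ B, G.Adj a b

/-- The invariant of depth-first search: `S` is the set of vertices that the search has left for
good, and `U` is its stack, with the current vertex first. The remaining vertices have not been
visited yet. -/
structure IsDFSState (G : SimpleGraph V) (S : Finset V) (U : List V) : Prop where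
  nodup : U.Nodup
  isChain : U.IsChain G.Adj
  notMem : ∀ v ∈ U, v ∉ S
  mem_or_mem_of_adj : ∀ s ∈ S, ∀ t, G.Adj s t → t ∈ S ∨ t ∈ U

namespace IsDFSState

variable {G : SimpleGraph V} {S : Finset V} {U : List V}

theorem empty : IsDFSState G ∅ [] where
  nodup := .nil
  isChain := .nil
  notMem := by simp
  mem_or_mem_of_adj := by simp

theorem push (hS : IsDFSState G S U) {v : V} (hvS : v ∉ S) (hvU : v ∉ U)
    (hadj : ∀ u ∈ U.head?, G.Adj v u) : IsDFSState G S (v :: U) where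
  nodup := hS.nodup.cons hvU
  isChain := List.isChain_cons.2 ⟨hadj, hS.isChain⟩
  notMem := List.forall_mem_cons.2 ⟨hvS, hS.notMem⟩
  mem_or_mem_of_adj s hs t hst := (hS.mem_or_mem_of_adj s hs t hst).imp_right (.tail v)

theorem pop {u : V} (hS : IsDFSState G S (u :: U))
    (hadj : ∀ t, G.Adj u t → t ∈ S ∨ t ∈ u :: U) : IsDFSState G (insert u S) U where
  nodup := hS.nodup.of_cons
  isChain := hS.isChain.tail
  notMem v hv := by
    have hvu : v ≠ u := fun h => (List.nodup_cons.1 hS.nodup).1 (h ▸ hv)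
    simpa [hvu] using hS.notMem v (.tail u hv)
  mem_or_mem_of_adj s hs t hst := by
    have h : t ∈ S ∨ t ∈ u :: U := by
      rcases Finset.mem_insert.1 hs with rfl | hs
      exacts [hadj t hst, hS.mem_or_mem_of_adj s hs t hst]
    simpa [or_assoc, or_left_comm] using h

end IsDFSState

variable [Fintype V]

-- A push and a pop both increase `2 * |S| + |U|` by exactly one.
theorem exists_isDFSState (G : SimpleGraph V) {m : ℕ} (hm : m ≤ Fintype.card V) :
    ∃ S U, IsDFSState G S U ∧ 2 * S.card + U.length = m := by
  induction m with
  | zero => exact ⟨∅, [], .empty, rfl⟩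
  | succ m ih =>
    obtain ⟨S, U, hS, hcard⟩ := ih (Nat.le_of_succ_le hm)
    rcases U with _ | ⟨u, U⟩
    · obtain ⟨v, -, hv⟩ := Finset.exists_mem_notMem_of_card_lt_card (s := S) (t := Finset.univ)
        (by simp at hcard ⊢; omega)
      exact ⟨S, [v], hS.push hv (by simp) (by simp), by simp_all⟩
    · by_cases h : ∃ v ∉ S, v ∉ u :: U ∧ G.Adj u v
      · obtain ⟨v, hvS, hvU, huv⟩ := h
        exact ⟨S, v :: u :: U, hS.push hvS hvU (by simpa using huv.symm), by simp [← hcard]; omega⟩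
      · push Not at h
        refine ⟨insert u S, U, hS.pop fun t hut => ?_, ?_⟩
        · by_contra! ht
          exact h t ht.1 ht.2 hut
        · rw [Finset.card_insert_of_notMem (hS.notMem u List.mem_cons_self), ← hcard,
            List.length_cons]
          omega

theorem IsJoined.exists_isChain {G : SimpleGraph V} {k : ℕ} (hG : IsJoined G k) :
    ∃ U : List V, U.Nodup ∧ U.IsChain G.Adj ∧ Fintype.card V + 2 ≤ U.length + 2 * k := by
  obtain ⟨S, U, hS, hcard⟩ := exists_isDFSState G le_rfl
  refine ⟨U, hS.nodup, hS.isChain, ?_⟩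
  suffices S.card < k by omega
  by_contra! hk
  set T := (S ∪ U.toFinset)ᶜ with hT
  have hTcard : T.card = S.card := by
    have hdisj : Disjoint S U.toFinset :=
      Finset.disjoint_right.2 fun v hv => hS.notMem v (List.mem_toFinset.1 hv)
    rw [hT, Finset.card_compl, Finset.card_union_of_disjoint hdisj,
      List.toFinset_card_of_nodup hS.nodup]
    omega
  obtain ⟨A, hA, hAcard⟩ := Finset.exists_subset_card_eq hk
  obtain ⟨B, hB, hBcard⟩ := Finset.exists_subset_card_eq (hTcard.symm ▸ hk : k ≤ T.card)
  have hST : Disjoint S T := disjoint_compl_right.mono_left Finset.subset_union_left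
  obtain ⟨a, ha, b, hb, hab⟩ := hG A B (hST.mono hA hB) hAcard hBcard
  have hbT := hB hb
  have hbSU := hS.mem_or_mem_of_adj a (hA ha) b hab
  simp_all

theorem IsJoined.exists_pathGraph_le {G : SimpleGraph V} {k m : ℕ} (hG : IsJoined G k)
    (hm : m + 2 * k ≤ Fintype.card V + 2) : ∃ φ : Fin m ↪ V, pathGraph m ≤ G.comap φ := by
  obtain ⟨U, hnodup, hchain, hU⟩ := hG.exists_isChain
  have hlen (i : Fin m) : i < U.length := by omega
  refine ⟨⟨fun i => U[i], fun i j hij => ?_⟩, fun i j hij => ?_⟩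
  · exact Fin.ext ((hnodup.getElem_inj_iff).1 hij)
  · rcases pathGraph_adj.1 hij with h | h
    · have := List.isChain_iff_getElem.1 hchain i (h ▸ hlen j)
      simpa [h] using this
    · have := List.isChain_iff_getElem.1 hchain j (h ▸ hlen i)
      simpa [h] using this.symm

end LongPath

open MeasureTheory ProbabilityTheory Filter unitInterval

/-! ### Random sets -/

section RandomSets

variable {ι κ : Type*}

theorem measurableSet_disjoint_finset (F : Finset ι) :
    MeasurableSet {S : Set ι | Disjoint S ↑F} := by
  have h : {S : Set ι | Disjoint S ↑F} = ⋂ i ∈ F, {S | i ∈ S}ᶜ := by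
    ext S
    simp [Set.disjoint_right]
  rw [h]
  exact F.measurableSet_biInter fun i _ => (measurableSet_setOfPred.2 (measurable_set_mem i)).compl

theorem ext_of_real_disjoint {μ ν : Measure (Set ι)} [IsFiniteMeasure μ] [IsFiniteMeasure ν]
    (h : ∀ F : Finset ι, μ.real {S | Disjoint S ↑F} = ν.real {S | Disjoint S ↑F}) : μ = ν := by
  have heq (F : Finset ι) : μ {S | Disjoint S ↑F} = ν {S | Disjoint S ↑F} :=
    (measureReal_eq_measureReal_iff).1 (h F)
  refine ext_of_generate_finite (Set.range fun F : Finset ι => {S : Set ι | Disjoint S ↑F})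
    (le_antisymm (fun B hB => ?_)
      (MeasurableSpace.generateFrom_le (Set.forall_mem_range.2 measurableSet_disjoint_finset)))
    ?_ (Set.forall_mem_range.2 heq) (by simpa using heq ∅)
  · set m := MeasurableSpace.generateFrom
      (Set.range fun F : Finset ι => {S : Set ι | Disjoint S ↑F})
    suffices Measurable[m, Set.instMeasurableSpace] (id : Set ι → Set ι) from this hB
    refine measurable_set_iff.2 fun i => @measurable_to_prop _ m _ ?_
    have h : (fun S : Set ι => i ∈ S) ⁻¹' {True} = {S | Disjoint S ↑({i} : Finset ι)}ᶜ := by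
      ext S
      simp
    exact h ▸ @MeasurableSet.compl _ _ m (MeasurableSpace.measurableSet_generateFrom ⟨{i}, rfl⟩)
  · rintro _ ⟨F, rfl⟩ _ ⟨F', rfl⟩ -
    exact ⟨F ∪ F', by ext S; simp⟩

theorem setBernoulli_real_disjoint (u : Set ι) (p : I) (F : Finset ι) :
    setBer(u, p).real {S | Disjoint S ↑F} = ∏ i ∈ F, if i ∈ u then 1 - (p : ℝ) else 1 := by
  have h : (fun P : ι → Prop => {i | P i}) ⁻¹' {S | Disjoint S ↑F} =
      Set.pi (F : Set ι) fun _ => {False} := by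
    ext P
    simp [Set.disjoint_right]
  have hprob (i : ι) : IsProbabilityMeasure
      (toNNReal p • Measure.dirac (i ∈ u) + toNNReal (σ p) • Measure.dirac False) := inferInstance
  rw [measureReal_def, setBernoulli_apply', h, Measure.infinitePi_pi _ (fun _ _ => .of_discrete),
    ENNReal.toReal_prod]
  refine Finset.prod_congr rfl fun i _ => ?_
  split_ifs with hi
  · simp [hi]
  · simp [hi, ← ENNReal.coe_add]

theorem measurable_union : Measurable fun S : Set ι × Set ι => S.1 ∪ S.2 := by
  refine measurable_set_iff.2 fun i => ?_
  simp only [Set.mem_union]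
  fun_prop

theorem setBernoulli_prod_map_union_real_disjoint (u v : Set ι) (p q : I) (F : Finset ι) :
    ((setBer(u, p).prod setBer(v, q)).map fun S => S.1 ∪ S.2).real {S | Disjoint S ↑F} =
      ∏ i ∈ F, (if i ∈ u then 1 - (p : ℝ) else 1) * if i ∈ v then 1 - (q : ℝ) else 1 := by
  have h : (fun S : Set ι × Set ι => S.1 ∪ S.2) ⁻¹' {S | Disjoint S ↑F} =
      {S | Disjoint S ↑F} ×ˢ {S | Disjoint S ↑F} := by
    ext S
    simp
  rw [map_measureReal_apply measurable_union (measurableSet_disjoint_finset F), h,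
    measureReal_prod_prod, setBernoulli_real_disjoint, setBernoulli_real_disjoint,
    Finset.prod_mul_distrib]

instance (u v : Set ι) (p q : I) :
    IsProbabilityMeasure ((setBer(u, p).prod setBer(v, q)).map fun S => S.1 ∪ S.2) :=
  Measure.isProbabilityMeasure_map measurable_union.aemeasurable

theorem setBernoulli_prod_map_union_of_disjoint {u v : Set ι} (huv : Disjoint u v) (p : I) :
    (setBer(u, p).prod setBer(v, p)).map (fun S => S.1 ∪ S.2) = setBer(u ∪ v, p) := by
  refine ext_of_real_disjoint fun F => ?_
  rw [setBernoulli_prod_map_union_real_disjoint, setBernoulli_real_disjoint]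
  refine Finset.prod_congr rfl fun i _ => ?_
  have hi : i ∈ u → i ∉ v := fun hu => Set.disjoint_left.1 huv hu
  by_cases hu : i ∈ u <;> by_cases hv : i ∈ v <;> simp_all

theorem setBernoulli_prod_map_union_of_symm_eq_mul {p q r : I} (h : σ p = σ q * σ r) (u : Set ι) :
    (setBer(u, q).prod setBer(u, r)).map (fun S => S.1 ∪ S.2) = setBer(u, p) := by
  have h : (1 - p : ℝ) = (1 - q) * (1 - r) := by simpa using congrArg ((↑) : I → ℝ) h
  refine ext_of_real_disjoint fun F => ?_
  rw [setBernoulli_prod_map_union_real_disjoint, setBernoulli_real_disjoint]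
  refine Finset.prod_congr rfl fun i _ => ?_
  split_ifs <;> simp [h]

theorem measurable_preimage (f : κ → ι) : Measurable fun S : Set ι => f ⁻¹' S :=
  measurable_set_iff.2 fun x => measurable_set_mem (f x)

theorem setBernoulli_map_preimage (f : κ ↪ ι) (u : Set ι) (p : I) :
    setBer(u, p).map (fun S => f ⁻¹' S) = setBer(f ⁻¹' u, p) := by
  have := Measure.isProbabilityMeasure_map (μ := setBer(u, p)) (measurable_preimage f).aemeasurable
  refine ext_of_real_disjoint fun F => ?_
  have h : (fun S : Set ι => f ⁻¹' S) ⁻¹' {S | Disjoint S ↑F} =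
      {S | Disjoint S ↑(F.map f)} := by
    ext S
    simp [Set.disjoint_right]
  rw [map_measureReal_apply (measurable_preimage f) (measurableSet_disjoint_finset F), h,
    setBernoulli_real_disjoint, setBernoulli_real_disjoint, Finset.prod_map]
  simp

end RandomSets

theorem prod_map_real_le_add {α β γ : Type*} [MeasurableSpace α] [MeasurableSpace β]
    [MeasurableSpace γ] {μ : Measure α} {ν : Measure β} [IsProbabilityMeasure μ]
    [IsProbabilityMeasure ν] {f : α × β → γ} (hf : Measurable f) {A : Set α} {C : Set γ}
    (hA : MeasurableSet A) (hC : MeasurableSet C) {b : ℝ} (hb : 0 ≤ b)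
    (h : ∀ x ∉ A, ν.real {y | f (x, y) ∈ C} ≤ b) :
    ((μ.prod ν).map f).real C ≤ μ.real A + b := by
  have hle (x : α) :
      ν (Prod.mk x ⁻¹' (f ⁻¹' C)) ≤ A.indicator 1 x + ENNReal.ofReal b := by
    by_cases hx : x ∈ A
    · simpa [hx] using prob_le_one.trans le_self_add
    · rw [Set.indicator_of_notMem hx, zero_add, ← ofReal_measureReal]
      exact ENNReal.ofReal_le_ofReal (h x hx)
  have hprod : (μ.prod ν) (f ⁻¹' C) ≤ μ A + ENNReal.ofReal b := calc
    (μ.prod ν) (f ⁻¹' C) ≤ ∫⁻ x, A.indicator 1 x + ENNReal.ofReal b ∂μ := by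
      rw [Measure.prod_apply (hf hC)]
      exact lintegral_mono hle
    _ = μ A + ENNReal.ofReal b := by
      simp [lintegral_add_right, lintegral_indicator_one hA]
  rw [map_measureReal_apply hf hC]
  calc (μ.prod ν).real (f ⁻¹' C) ≤ (μ A + ENNReal.ofReal b).toReal :=
        ENNReal.toReal_mono (by finiteness) hprod
    _ = μ.real A + b := by
      rw [ENNReal.toReal_add (by finiteness) (by finiteness), ENNReal.toReal_ofReal hb,
        measureReal_def]

/-! ### Binomial random graphs -/

section BinomialRandom

variable {V : Type*} [Finite V]

instance : DiscreteMeasurableSpace (SimpleGraph V) where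
  forall_measurableSet A := by
    have h : A = edgeSet ⁻¹' (edgeSet '' A) := (Set.preimage_image_eq A edgeSet_injective).symm
    rw [h]
    exact measurableEmbedding_edgeSet.measurable .of_discrete

theorem binomialRandom_prod_map_sup {p q r : I} (h : σ p = σ q * σ r) :
    (G(V, q).prod G(V, r)).map (fun G => G.1 ⊔ G.2) = G(V, p) := by
  rw [binomialRandom_eq_map, binomialRandom_eq_map, binomialRandom_eq_map,
    Measure.map_prod_map _ _ measurable_fromEdgeSet measurable_fromEdgeSet,
    Measure.map_map .of_discrete .of_discrete,
    ← setBernoulli_prod_map_union_of_symm_eq_mul h,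
    Measure.map_map .of_discrete .of_discrete]
  congr 1
  ext1 S
  exact (fromEdgeSet_union _ _).symm

theorem binomialRandom_real_le_add {p q r : I} (h : σ p = σ q * σ r) (A B : Set (SimpleGraph V))
    {b : ℝ} (hb : 0 ≤ b) (hB : ∀ G ∉ A, G(V, r).real {H | G ⊔ H ∈ B} ≤ b) :
    G(V, p).real B ≤ G(V, q).real A + b := by
  rw [← binomialRandom_prod_map_sup h]
  exact prod_map_real_le_add .of_discrete .of_discrete .of_discrete hb hB

theorem binomialRandom_map_edgeSet (p : I) :
    G(V, p).map edgeSet = setBer(Sym2.diagSetᶜ, p) := by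
  rw [binomialRandom_eq_map, Measure.map_map .of_discrete .of_discrete]
  have h : edgeSet ∘ fromEdgeSet =ᵐ[setBer((Sym2.diagSetᶜ : Set (Sym2 V)), p)] id := by
    filter_upwards [setBernoulli_ae_subset] with S hS
    simpa [← Set.subset_compl_iff_disjoint_right] using hS
  rw [Measure.map_congr h, Measure.map_id]

theorem binomialRandom_real_forall_notMem (p : I) {F : Finset (Sym2 V)}
    (hF : ∀ e ∈ F, ¬e.IsDiag) :
    G(V, p).real {G | ∀ e ∈ F, e ∉ G.edgeSet} = (1 - p) ^ F.card := by
  have h : {G : SimpleGraph V | ∀ e ∈ F, e ∉ G.edgeSet} = edgeSet ⁻¹' {S | Disjoint S ↑F} := by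
    ext G
    simp [Set.disjoint_right]
  rw [h, ← map_measureReal_apply .of_discrete .of_discrete, binomialRandom_map_edgeSet,
    setBernoulli_real_disjoint]
  exact (Finset.prod_congr rfl fun e he => if_pos (hF e he)).trans (Finset.prod_const _)

theorem binomialRandom_real_forall_not_adj_le (p : I) {κ : Type*} {s : Finset κ} {f g : κ → V}
    (hfg : ∀ x ∈ s, f x ≠ g x) {K : ℕ} (hK : K ≤ (s.image fun x => s(f x, g x)).card) :
    G(V, p).real {G | ∀ x ∈ s, ¬G.Adj (f x) (g x)} ≤ (1 - p) ^ K := by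
  have h : {G : SimpleGraph V | ∀ x ∈ s, ¬G.Adj (f x) (g x)} =
      {G | ∀ e ∈ s.image fun x => s(f x, g x), e ∉ G.edgeSet} := by
    ext G
    simp
  rw [h, binomialRandom_real_forall_notMem p (by simpa using hfg)]
  exact pow_le_pow_of_le_one (one_minus_nonneg p) (one_minus_le_one p) hK

theorem gnpProb_eq_binomialRandom_real (n : ℕ) (p : I) (A : SimpleGraph (Fin n) → Prop) :
    gnpProb n p A = G(Fin n, p).real {G | A G} := by
  have h : {G | A G} = (Finset.univ.filter A : Finset (SimpleGraph (Fin n))) := by simp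
  rw [gnpProb, ← Finset.sum_filter, h, ← sum_measureReal_singleton]
  exact Finset.sum_congr rfl fun G _ => by simp [measureReal_def]

end BinomialRandom

/-! ### Rounds of exposure of the random graph -/

section Joined

variable {V : Type*}

theorem card_image_sym2Mk_product {A B : Finset V} (hAB : Disjoint A B) :
    ((A ×ˢ B).image fun x => s(x.1, x.2)).card = A.card * B.card := by
  rw [Finset.card_image_of_injOn, Finset.card_product]
  rintro ⟨a, b⟩ hab ⟨a', b'⟩ hab' h
  simp only [Finset.coe_product, Set.mem_prod, Finset.mem_coe] at hab hab'
  rcases Sym2.eq_iff.1 h with ⟨ha, hb⟩ | ⟨ha, -⟩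
  · exact Prod.ext ha hb
  · exact absurd ha (Finset.disjoint_iff_ne.1 hAB a hab.1 b' hab'.2)

variable [Fintype V]

theorem binomialRandom_real_not_isJoined_le (p : I) (k : ℕ) :
    G(V, p).real {G | ¬IsJoined G k} ≤ 4 ^ Fintype.card V * (1 - p) ^ (k * k) := by
  set pairs := Finset.univ.filter fun P : Finset V × Finset V =>
    Disjoint P.1 P.2 ∧ P.1.card = k ∧ P.2.card = k
  have hcover : {G : SimpleGraph V | ¬IsJoined G k} ⊆
      ⋃ P ∈ pairs, {G | ∀ x ∈ P.1 ×ˢ P.2, ¬G.Adj x.1 x.2} := by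
    intro G hG
    simp only [IsJoined, Set.mem_ofPred_eq] at hG
    push Not at hG
    obtain ⟨A, B, hAB, hA, hB, hG⟩ := hG
    simp only [Set.mem_iUnion]
    exact ⟨(A, B), by simp [pairs, *], by simpa using fun a b ha hb => hG a ha b hb⟩
  have hpair : ∀ P ∈ pairs,
      G(V, p).real {G | ∀ x ∈ P.1 ×ˢ P.2, ¬G.Adj x.1 x.2} ≤ (1 - p) ^ (k * k) := by
    intro P hP
    obtain ⟨hdisj, h₁, h₂⟩ := (Finset.mem_filter.1 hP).2
    have hne : ∀ x ∈ P.1 ×ˢ P.2, x.1 ≠ x.2 := fun x hx =>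
      Finset.disjoint_iff_ne.1 hdisj _ (Finset.mem_product.1 hx).1 _ (Finset.mem_product.1 hx).2
    refine binomialRandom_real_forall_not_adj_le p hne (le_of_eq ?_)
    rw [card_image_sym2Mk_product hdisj, h₁, h₂]
  have hpairs : (pairs.card : ℝ) ≤ 4 ^ Fintype.card V := by
    have h := pairs.card_le_univ
    rw [Fintype.card_prod, Fintype.card_finset, ← mul_pow] at h
    exact_mod_cast h
  calc G(V, p).real {G | ¬IsJoined G k}
    _ ≤ ∑ P ∈ pairs, G(V, p).real {G | ∀ x ∈ P.1 ×ˢ P.2, ¬G.Adj x.1 x.2} :=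
        (measureReal_mono hcover (measure_ne_top _ _)).trans (measureReal_biUnion_finset_le _ _)
    _ ≤ pairs.card * (1 - p) ^ (k * k) := by
        simpa using Finset.sum_le_card_nsmul _ _ _ hpair
    _ ≤ 4 ^ Fintype.card V * (1 - p) ^ (k * k) :=
        mul_le_mul_of_nonneg_right hpairs (pow_nonneg (one_minus_nonneg p) _)

end Joined

section Meetings

variable {V : Type*} [Finite V]

theorem binomialRandom_real_not_acquaintedAlong_le (p : I) {m K : ℕ} (hK : 4 * K ≤ 2 * m)
    (φ : Fin m ↪ V) {i j : Fin m} (hij : i ≠ j) :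
    G(V, p).real {G | ¬AcquaintedAlong (G.comap φ) (oddEvenRounds m (4 * K)) i j} ≤
      (1 - p) ^ K := by
  have hsub : {G : SimpleGraph V | ¬AcquaintedAlong (G.comap φ) (oddEvenRounds m (4 * K)) i j} ⊆
      {G | ∀ t ∈ Finset.range (4 * K),
        ¬G.Adj (φ ((oddEvenRounds m t).prod i)) (φ ((oddEvenRounds m t).prod j))} :=
    fun G hG t ht hadj =>
      hG ⟨_, oddEvenRounds_suffix m (Finset.mem_range.1 ht).le, hadj⟩
  refine (measureReal_mono hsub (measure_ne_top _ _)).trans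
    (binomialRandom_real_forall_not_adj_le p (fun t _ => ?_) ?_)
  · exact φ.injective.ne ((oddEvenRounds m t).prod.injective.ne hij)
  · have himage : ((Finset.range (4 * K)).image fun t =>
        s(φ ((oddEvenRounds m t).prod i), φ ((oddEvenRounds m t).prod j))).card =
        ((Finset.range (4 * K)).image fun t =>
          s((oddEvenRounds m t).prod i, (oddEvenRounds m t).prod j)).card := by
      rw [← Finset.card_image_of_injective _ (Sym2.map.injective φ.injective), Finset.image_image]
      rfl
    have := le_four_mul_card_image_oddEvenRounds_prod hK i j
    omega

theorem binomialRandom_real_exists_not_acquaintedAlong_le (p : I) {m : ℕ} (K : ℕ)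
    {G : SimpleGraph V} {φ : Fin m ↪ V} (hφ : pathGraph m ≤ G.comap φ) :
    G(V, p).real {H | ∃ i j, i ≠ j ∧
      ¬AcquaintedAlong ((G ⊔ H).comap φ) (oddEvenRounds m (4 * K)) i j} ≤ m ^ 2 * (1 - p) ^ K := by
  have hp : (0 : ℝ) ≤ 1 - p := one_minus_nonneg p
  rcases le_total m (4 * K) with hm | hm
  · have hempty : {H | ∃ i j, i ≠ j ∧
        ¬AcquaintedAlong ((G ⊔ H).comap φ) (oddEvenRounds m (4 * K)) i j} = ∅ := by
      refine Set.eq_empty_of_forall_notMem fun H ⟨i, j, hij, hacq⟩ => hacq ?_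
      exact acquaintedAlong_oddEvenRounds (hφ.trans (comap_monotone φ le_sup_left)) hm hij
    rw [hempty, measureReal_empty]
    positivity
  set pairs := Finset.univ.filter fun x : Fin m × Fin m => x.1 ≠ x.2
  have hcover : {H | ∃ i j, i ≠ j ∧
      ¬AcquaintedAlong ((G ⊔ H).comap φ) (oddEvenRounds m (4 * K)) i j} ⊆
      ⋃ x ∈ pairs, {H | ¬AcquaintedAlong (H.comap φ) (oddEvenRounds m (4 * K)) x.1 x.2} := by
    rintro H ⟨i, j, hij, hacq⟩
    simp only [Set.mem_iUnion]
    exact ⟨(i, j), by simpa [pairs] using hij,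
      fun h => hacq (h.mono (comap_monotone φ le_sup_right))⟩
  have hpairs : (pairs.card : ℝ) ≤ m ^ 2 := by
    have h := pairs.card_le_univ
    rw [Fintype.card_prod, Fintype.card_fin, ← sq] at h
    exact_mod_cast h
  calc G(V, p).real _
    _ ≤ ∑ x ∈ pairs, G(V, p).real
        {H | ¬AcquaintedAlong (H.comap φ) (oddEvenRounds m (4 * K)) x.1 x.2} :=
      (measureReal_mono hcover (measure_ne_top _ _)).trans (measureReal_biUnion_finset_le _ _)
    _ ≤ pairs.card * (1 - p) ^ K := by
      rw [← nsmul_eq_mul]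
      exact Finset.sum_le_card_nsmul _ _ _ fun x hx =>
        binomialRandom_real_not_acquaintedAlong_le p (by omega) φ (Finset.mem_filter.1 hx).2
    _ ≤ m ^ 2 * (1 - p) ^ K := mul_le_mul_of_nonneg_right hpairs (pow_nonneg hp K)

end Meetings

section Greedy

variable {α β γ : Type*}

theorem exists_injOn_insert {c : β → γ} {R : Finset α} {S T : Set (α × β)} {f : α → β}
    (hf : ∀ s ∈ R, (s, f s) ∈ S) (hinj : Set.InjOn (c ∘ f) R) {r : α} (hr : r ∉ R) {b : β}
    (hrb : (r, b) ∈ T) (hb : c b ∉ R.image (c ∘ f)) :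
    ∃ g : α → β, (∀ s ∈ insert r R, (s, g s) ∈ S ∪ T) ∧ Set.InjOn (c ∘ g) ↑(insert r R) := by
  have hfr : ∀ s ∈ R, Function.update f r b s = f s := fun s hs =>
    Function.update_of_ne (ne_of_mem_of_not_mem hs hr) _ _
  have heq : Set.EqOn (c ∘ Function.update f r b) (c ∘ f) R := fun s hs => by
    simp only [Function.comp_apply, hfr s hs]
  refine ⟨Function.update f r b, Finset.forall_mem_insert _ _ _ |>.2 ⟨?_, fun s hs => ?_⟩, ?_⟩
  · exact .inr (by simpa using hrb)
  · rw [hfr s hs]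
    exact .inl (hf s hs)
  · rw [Finset.coe_insert, Set.injOn_insert (by simpa using hr), heq.image_eq]
    exact ⟨hinj.congr heq.symm, by simpa using hb⟩

variable [Fintype β]

theorem card_le_card_filter_notMem {c : β → γ} {d M : ℕ}
    (hc : ∀ x, (Finset.univ.filter fun b => c b = x).card ≤ d) {X : Finset γ}
    (hM : M + d * X.card ≤ Fintype.card β) : M ≤ (Finset.univ.filter fun b => c b ∉ X).card := by
  have hX : (Finset.univ.filter fun b => c b ∈ X).card ≤ d * X.card :=
    Finset.card_le_mul_card_image_of_maps_to (fun b hb => (Finset.mem_filter.1 hb).2) d fun x _ =>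
      (Finset.card_le_card (Finset.filter_subset_filter _ (Finset.filter_subset _ _))).trans (hc x)
  have := Finset.card_filter_add_card_filter_not (s := (Finset.univ : Finset β)) (fun b => c b ∈ X)
  rw [Finset.card_univ] at this
  omega

theorem setBernoulli_real_forall_notMem_le (p : I) {c : β → γ} {d M : ℕ}
    (hc : ∀ x, (Finset.univ.filter fun b => c b = x).card ≤ d) {X : Finset γ}
    (hM : M + d * X.card ≤ Fintype.card β) (r : α) :
    setBer({r} ×ˢ (Set.univ : Set β), p).real {S | ∀ b, c b ∉ X → (r, b) ∉ S} ≤ (1 - p) ^ M := by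
  set F := (Finset.univ.filter fun b => c b ∉ X).map (Function.Embedding.sectR r β) with hF
  have h : {S : Set (α × β) | ∀ b, c b ∉ X → (r, b) ∉ S} = {S | Disjoint S ↑F} := by
    ext S
    simp [hF, Set.disjoint_right]
  rw [h, setBernoulli_real_disjoint, hF, Finset.prod_map]
  simp only [Function.Embedding.sectR_apply, Set.mem_prod, Set.mem_singleton_iff, Set.mem_univ,
    and_true, if_true, Finset.prod_const]
  exact pow_le_pow_of_le_one (one_minus_nonneg p) (one_minus_le_one p)
    (card_le_card_filter_notMem hc hM)

theorem setBernoulli_real_not_exists_injOn_le [Finite α] [Nonempty β] (p : I) {c : β → γ} {d M : ℕ}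
    (hc : ∀ x, (Finset.univ.filter fun b => c b = x).card ≤ d) {R : Finset α}
    (hM : M + d * R.card ≤ Fintype.card β) :
    setBer((R : Set α) ×ˢ (Set.univ : Set β), p).real
      {S | ¬∃ f : α → β, (∀ r ∈ R, (r, f r) ∈ S) ∧ Set.InjOn (c ∘ f) R} ≤ R.card * (1 - p) ^ M := by
  induction R using Finset.induction_on with
  | empty => simp
  | insert r R hr ih =>
    rw [Finset.card_insert_of_notMem hr, Nat.cast_add_one, add_one_mul]
    rw [Finset.card_insert_of_notMem hr] at hM
    have hdisj : Disjoint ((R : Set α) ×ˢ (Set.univ : Set β)) ({r} ×ˢ Set.univ) := by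
      rw [Set.disjoint_prod]
      exact .inl (by simpa using hr)
    have hunion : ((insert r R : Finset α) : Set α) ×ˢ (Set.univ : Set β) =
        (R : Set α) ×ˢ Set.univ ∪ {r} ×ˢ Set.univ := by
      rw [Finset.coe_insert, Set.insert_eq, Set.union_prod, Set.union_comm]
    rw [hunion, ← setBernoulli_prod_map_union_of_disjoint hdisj]
    refine (prod_map_real_le_add measurable_union .of_discrete .of_discrete
      (pow_nonneg (one_minus_nonneg p) M) fun S hS => ?_).trans
      (add_le_add_left (ih (by grind)) _)
    obtain ⟨f, hf, hinj⟩ := not_not.1 hS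
    have hsub : {T | S ∪ T ∈ {S | ¬∃ f : α → β, (∀ s ∈ insert r R, (s, f s) ∈ S) ∧
        Set.InjOn (c ∘ f) ↑(insert r R)}} ⊆ {T | ∀ b, c b ∉ R.image (c ∘ f) → (r, b) ∉ T} :=
      fun T hT b hb hrb => hT (exists_injOn_insert hf hinj hr hrb hb)
    refine (measureReal_mono hsub (measure_ne_top _ _)).trans
      (setBernoulli_real_forall_notMem_le p hc ?_ r)
    rw [Finset.card_image_of_injOn hinj]
    grind

variable {V : Type*} [Finite V]

theorem binomialRandom_real_not_exists_injective_le [Fintype α] [Nonempty β] (p : I) {c : β → γ}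
    {d M : ℕ} (hc : ∀ x, (Finset.univ.filter fun b => c b = x).card ≤ d)
    (hM : M + d * Fintype.card α ≤ Fintype.card β) {f : α ↪ V} {g : β ↪ V}
    (hfg : ∀ a b, f a ≠ g b) :
    G(V, p).real {G | ¬∃ s : α → β, (∀ a, G.Adj (f a) (g (s a))) ∧ Function.Injective (c ∘ s)} ≤
      Fintype.card α * (1 - p) ^ M := by
  obtain ⟨ψ, hψ⟩ : ∃ ψ : α × β ↪ Sym2 V, ∀ x, ψ x = s(f x.1, g x.2) := by
    refine ⟨⟨fun x => s(f x.1, g x.2), fun x y h => ?_⟩, fun _ => rfl⟩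
    rcases Sym2.eq_iff.1 h with ⟨h₁, h₂⟩ | ⟨h₁, -⟩
    · exact Prod.ext (f.injective h₁) (g.injective h₂)
    · exact absurd h₁ (hfg _ _)
  have hmap : G(V, p).map (fun G => ψ ⁻¹' G.edgeSet) = setBer((Set.univ : Set (α × β)), p) := by
    have huniv : ψ ⁻¹' Sym2.diagSetᶜ = Set.univ :=
      Set.eq_univ_of_forall fun x => by simpa [hψ] using hfg x.1 x.2
    rw [← huniv, ← setBernoulli_map_preimage, ← binomialRandom_map_edgeSet,
      Measure.map_map (measurable_preimage ψ) .of_discrete]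
    rfl
  have h := setBernoulli_real_not_exists_injOn_le p hc (R := (Finset.univ : Finset α)) hM
  rw [Finset.coe_univ, Set.univ_prod_univ, ← hmap,
    map_measureReal_apply .of_discrete .of_discrete] at h
  simpa [hψ] using h

end Greedy

section Acquaintance

variable {V : Type*}

theorem acquaintableIn_of_pathGraph_le {G : SimpleGraph V} {m T : ℕ} {φ : Fin m ↪ V}
    (hφ : pathGraph m ≤ G.comap φ) {e : ↥(Set.range φ)ᶜ ⊕ ↥(Set.range φ)ᶜ ↪ Fin m}
    (hentry : ∀ r : ↥(Set.range φ)ᶜ, G.Adj r (φ (e (.inl r))))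
    (hpath : ∀ r, (pathGraph m).Adj (e (.inl r)) (e (.inr r)))
    (hacq : ∀ i j, i ≠ j → AcquaintedAlong (G.comap φ) (oddEvenRounds m T) i j) :
    AcquaintableIn G (5 * T + 3) := by
  have h := acquaintableIn_of_path (forall_mem_oddEvenRounds hφ T) hacq hentry
    fun r => hφ (hpath r)
  rwa [length_oddEvenRounds] at h

theorem exists_embedding_of_injective_fst {R : Type*} {h : ℕ} {s : R → Fin h × Fin 2}
    (hs : Function.Injective (Prod.fst ∘ s)) :
    ∃ e : R ⊕ R ↪ Fin (h * 2), (∀ r, e (.inl r) = finProdFinEquiv (s r)) ∧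
      ∀ r, (pathGraph (h * 2)).Adj (e (.inl r)) (e (.inr r)) := by
  have hinj : Function.Injective (Sum.elim s fun r => ((s r).1, (s r).2.rev)) := by
    refine .sumElim hs.of_comp (fun r r' hr => hs (Prod.ext_iff.1 hr).1) fun r r' hr => ?_
    obtain ⟨hfst, hsnd⟩ := Prod.ext_iff.1 hr
    obtain rfl : r = r' := hs hfst
    have := Fin.ext_iff.1 hsnd
    simp only [Fin.val_rev] at this
    omega
  refine ⟨(⟨_, hinj⟩ : R ⊕ R ↪ Fin h × Fin 2).trans finProdFinEquiv.toEmbedding, fun r => rfl,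
    fun r => pathGraph_adj.2 ?_⟩
  simp only [Function.Embedding.trans_apply, Function.Embedding.coeFn_mk, Sum.elim_inl,
    Sum.elim_inr, finProdFinEquiv_apply_val, Fin.val_rev]
  omega

variable [Fintype V]

theorem binomialRandom_real_not_exists_attachment_le (p : I) {h M : ℕ} (hh : 0 < h)
    (φ : Fin (h * 2) ↪ V) (hM : M + 2 * Fintype.card V ≤ 3 * (h * 2)) :
    G(V, p).real {G | ¬∃ e : ↥(Set.range φ)ᶜ ⊕ ↥(Set.range φ)ᶜ ↪ Fin (h * 2),
      (∀ r : ↥(Set.range φ)ᶜ, G.Adj r (φ (e (.inl r)))) ∧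
        ∀ r, (pathGraph (h * 2)).Adj (e (.inl r)) (e (.inr r))} ≤
      Fintype.card V * (1 - p) ^ M := by
  have : NeZero h := ⟨hh.ne'⟩
  have hcard : Fintype.card ↥(Set.range φ)ᶜ = Fintype.card V - h * 2 := by
    rw [Fintype.card_compl_set, Set.card_range_of_injective φ.injective, Fintype.card_fin]
  have hle : h * 2 ≤ Fintype.card V := by simpa using Fintype.card_le_of_embedding φ
  have hgreedy := binomialRandom_real_not_exists_injective_le p (c := Prod.fst) (d := 2) (M := M)
    (fun x => Finset.card_le_card_of_injOn (t := (Finset.univ : Finset (Fin 2))) Prod.snd (by simp)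
      fun b hb b' hb' hbb' => Prod.ext (by simp_all) hbb')
    (f := Function.Embedding.subtype (· ∈ (Set.range φ)ᶜ))
    (g := finProdFinEquiv.toEmbedding.trans φ)
    (by rw [hcard, Fintype.card_prod, Fintype.card_fin, Fintype.card_fin]; omega)
    fun r b hr => r.2 ⟨_, hr.symm⟩
  refine (measureReal_mono (Set.compl_subset_compl.2 fun G => ?_) (measure_ne_top _ _)).trans
    (hgreedy.trans ?_)
  · rintro ⟨s, hadj, hs⟩
    obtain ⟨e, he, hpath⟩ := exists_embedding_of_injective_fst hs
    exact ⟨e, fun r => he r ▸ hadj r, hpath⟩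
  · exact mul_le_mul_of_nonneg_right (Nat.cast_le.2 (Fintype.card_subtype_le _))
      (pow_nonneg (one_minus_nonneg p) M)

theorem binomialRandom_real_not_acquaintableIn_le {p p₁ p₂ p₃ : I}
    (hp : σ p = σ p₁ * (σ p₂ * σ p₃)) {k M : ℕ} (K : ℕ) (hM : M + 6 * k ≤ Fintype.card V) :
    G(V, p).real {G | ¬AcquaintableIn G (20 * K + 3)} ≤
      4 ^ Fintype.card V * (1 - p₁) ^ (k * k) +
        (Fintype.card V * (1 - p₂) ^ M + Fintype.card V ^ 2 * (1 - p₃) ^ K) := by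
  have hnonneg (r : I) (m : ℕ) : (0 : ℝ) ≤ (1 - r) ^ m := pow_nonneg (one_minus_nonneg r) m
  rw [← symm_symm (σ p₂ * σ p₃)] at hp
  refine (binomialRandom_real_le_add hp _ _ (add_nonneg ?_ ?_) fun G₁ hG₁ => ?_).trans
    (add_le_add_left (binomialRandom_real_not_isJoined_le p₁ k) _)
  · exact mul_nonneg (Nat.cast_nonneg _) (hnonneg _ _)
  · exact mul_nonneg (by positivity) (hnonneg _ _)
  obtain ⟨h, hh⟩ : ∃ h, h = (Fintype.card V + 2 - 2 * k) / 2 := ⟨_, rfl⟩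
  obtain ⟨φ, hφ⟩ := (not_not.1 hG₁).exists_pathGraph_le (m := h * 2) (by omega)
  have hle : h * 2 ≤ Fintype.card V := by simpa using Fintype.card_le_of_embedding φ
  refine (binomialRandom_real_le_add (symm_symm _) _ _ (mul_nonneg (by positivity) (hnonneg _ _))
    fun G₂ hG₂ => ?_).trans
    (add_le_add_left (binomialRandom_real_not_exists_attachment_le p₂ (by omega) φ (by omega)) _)
  obtain ⟨e, hentry, hpath⟩ := not_not.1 hG₂
  have hsub : {G₃ | G₁ ⊔ (G₂ ⊔ G₃) ∈ {G | ¬AcquaintableIn G (20 * K + 3)}} ⊆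
      {G₃ | ∃ i j, i ≠ j ∧
        ¬AcquaintedAlong ((G₁ ⊔ G₃).comap φ) (oddEvenRounds (h * 2) (4 * K)) i j} := by
    intro G₃ hG₃
    rw [Set.mem_ofPred_eq]
    by_contra! hacq
    refine hG₃ ?_
    rw [show 20 * K + 3 = 5 * (4 * K) + 3 by ring]
    exact acquaintableIn_of_pathGraph_le (hφ.trans (comap_monotone φ le_sup_left))
      (fun r => .inr (.inl (hentry r))) hpath
      fun i j hij => (hacq i j hij).mono (comap_monotone φ (sup_le_sup_left le_sup_right G₁))
  refine (measureReal_mono hsub (measure_ne_top _ _)).trans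
    ((binomialRandom_real_exists_not_acquaintedAlong_le p₃ K hφ).trans ?_)
  exact mul_le_mul_of_nonneg_right (by gcongr) (hnonneg _ _)

end Acquaintance

/-! ### Asymptotics -/

section Asymptotics

theorem mul_one_sub_pow_le_exp {a b x : ℝ} (ha : 0 < a) (hx : x ≤ 1) {k : ℕ}
    (h : Real.log a + b ≤ x * k) : a * (1 - x) ^ k ≤ Real.exp (-b) := by
  calc a * (1 - x) ^ k
    _ ≤ Real.exp (Real.log a) * Real.exp (-x) ^ k := by
      rw [Real.exp_log ha]
      gcongr
      exact Real.one_sub_le_exp_neg x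
    _ = Real.exp (Real.log a - x * k) := by
      rw [← Real.exp_nat_mul, ← Real.exp_add]
      ring_nf
    _ ≤ Real.exp (-b) := Real.exp_le_exp.2 (by linarith)

theorem exists_symm_eq_mul {c : I} (hc : (c : ℝ) ≤ 1 / 2) (p : I) :
    ∃ q : I, (1 - 2 * c) * p ≤ (q : ℝ) ∧ σ p = σ (c * p) * (σ q * σ (c * p)) := by
  obtain ⟨x, hx⟩ : ∃ x : ℝ, x = c * p := ⟨_, rfl⟩
  have hx0 : 0 ≤ x := hx ▸ mul_nonneg c.2.1 p.2.1
  have hxp : 2 * x ≤ p := by nlinarith [p.2.1]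
  have hpos : 0 < (1 - x) ^ 2 := by nlinarith [p.2.2]
  have hlower : (1 - 2 * c) * (p : ℝ) ≤ 1 - (1 - p) / (1 - x) ^ 2 := by
    have h : (1 - p) / (1 - x) ^ 2 ≤ 1 - (p - 2 * x) := by
      rw [div_le_iff₀ hpos]
      have hsq : 1 - 2 * x ≤ (1 - x) ^ 2 := by nlinarith
      nlinarith [p.2.2]
    linarith
  have hupper : 0 ≤ (1 - p) / (1 - x) ^ 2 := div_nonneg (one_minus_nonneg p) hpos.le
  refine ⟨⟨1 - (1 - p) / (1 - x) ^ 2, by nlinarith [p.2.1], by linarith⟩, hlower, Subtype.ext ?_⟩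
  simp only [coe_symm_eq, Set.Icc.coe_mul, ← hx, sub_sub_cancel]
  linear_combination -div_mul_cancel₀ (1 - (p : ℝ)) hpos.ne'

theorem mul_le_mul_mul_sq {a c δ L p n k : ℝ} (hc : 0 ≤ c) (hδ : 0 ≤ δ) (hp : 0 ≤ p) (hn : 0 ≤ n)
    (ha : 4 * a ≤ c * δ ^ 2 * L) (hL : L ≤ p * n) (hk : δ * n / 2 ≤ k) :
    n * a ≤ c * p * (k * k) := by
  have hk0 : 0 ≤ k := le_trans (by positivity) hk
  calc n * a
    _ ≤ n * (c * δ ^ 2 * (p * n) / 4) := by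
      gcongr
      have := mul_le_mul_of_nonneg_left hL (by positivity : 0 ≤ c * δ ^ 2)
      linarith
    _ = c * p * ((δ * n / 2) * (δ * n / 2)) := by ring
    _ ≤ c * p * (k * k) := by gcongr

-- The constants are those of `c = ε / 16` in `exists_symm_eq_mul` and `M = n - 6 * k` with
-- `k ≤ ε / 64 * n`.
theorem one_add_half_mul_le {ε L p q n M : ℝ} (hε : 0 ≤ ε) (hε1 : ε ≤ 1) (hL : 0 ≤ L)
    (hp : 0 ≤ p) (hn : 0 ≤ n) (hpn : (1 + ε) * L ≤ p * n) (hq : (1 - ε / 8) * p ≤ q)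
    (hM : (1 - 3 * ε / 32) * n ≤ M) : (1 + ε / 2) * L ≤ q * M := by
  have h₁ : 0 ≤ 1 - ε / 8 := by linarith
  have h₂ : 0 ≤ 1 - 3 * ε / 32 := by linarith
  calc (1 + ε / 2) * L
    _ ≤ ((1 - ε / 8) * (1 - 3 * ε / 32) * (1 + ε)) * L := by
      gcongr
      nlinarith [mul_nonneg hε (sub_nonneg.2 hε1), pow_nonneg hε 2, pow_nonneg hε 3]
    _ ≤ (1 - ε / 8) * (1 - 3 * ε / 32) * (p * n) := by
      rw [mul_assoc]
      gcongr
    _ = (1 - ε / 8) * p * ((1 - 3 * ε / 32) * n) := by ring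
    _ ≤ q * M := by
      have : 0 ≤ q := (mul_nonneg h₁ hp).trans hq
      gcongr

theorem binomialRandom_real_not_acquaintableIn_le_exp {V : Type*} [Fintype V] {n K : ℕ}
    (hV : Fintype.card V = n) {ε : ℝ} (hε : 0 < ε) (hε1 : ε ≤ 1) {p : I} (hn : 2 ≤ ε / 64 * n)
    (hlog : 4 * (Real.log 4 + 1) ≤ ε / 16 * (ε / 64) ^ 2 * Real.log n)
    (hp : (1 + ε) * Real.log n ≤ p * n) (hK : 3 * Real.log n ≤ ε / 16 * p * K) :
    G(V, p).real {G | ¬AcquaintableIn G (20 * K + 3)} ≤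
      Real.exp (-n) + (Real.exp (-(ε / 2 * Real.log n)) + Real.exp (-Real.log n)) := by
  have hn0 : (0 : ℝ) < n := by by_contra! h; nlinarith
  have hL : 0 ≤ Real.log n := Real.log_natCast_nonneg n
  obtain ⟨c, hc⟩ : ∃ c : I, (c : ℝ) = ε / 16 := ⟨⟨ε / 16, by linarith, by linarith⟩, rfl⟩
  obtain ⟨q, hq, hpq⟩ := exists_symm_eq_mul (c := c) (by linarith) p
  set k := ⌊ε / 64 * n⌋₊
  have hk : k ≤ ε / 64 * n := Nat.floor_le (by linarith)
  have hk' : ε / 64 * n < k + 1 := Nat.lt_floor_add_one _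
  have hkn : 6 * k ≤ n := by
    have : (6 * k : ℝ) ≤ n := by nlinarith
    exact_mod_cast this
  have hbound := binomialRandom_real_not_acquaintableIn_le (V := V) hpq (k := k) (M := n - 6 * k) K
    (by rw [hV]; omega)
  rw [hV] at hbound
  refine hbound.trans (add_le_add ?_ (add_le_add ?_ ?_))
  · refine mul_one_sub_pow_le_exp (by positivity) (c * p).2.2 ?_
    have := mul_le_mul_mul_sq (by positivity : 0 ≤ ε / 16) (by positivity) p.2.1 hn0.le hlog
      (k := k) (by nlinarith) (by linarith)
    rw [Real.log_pow, Set.Icc.coe_mul, hc]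
    push_cast
    linarith
  · refine mul_one_sub_pow_le_exp hn0 q.2.2 ?_
    have := one_add_half_mul_le hε.le hε1 hL p.2.1 hn0.le hp (q := q) (M := (n - 6 * k : ℕ)) ?_ ?_
    · linarith
    · convert hq using 2
      rw [hc]
      ring
    · push_cast [hkn]
      linarith
  · refine mul_one_sub_pow_le_exp (by positivity) (c * p).2.2 ?_
    rw [Real.log_pow, Set.Icc.coe_mul, hc]
    push_cast
    linarith

theorem one_sub_le_gnpProb {ε : ℝ} (hε : 0 < ε) (hε1 : ε ≤ 1) {n : ℕ} (p : I)
    (hn : 2 ≤ ε / 64 * n) (hn1 : 1 ≤ Real.log n)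
    (hlog : 4 * (Real.log 4 + 1) ≤ ε / 16 * (ε / 64) ^ 2 * Real.log n)
    (hp : (1 + ε) * Real.log n ≤ p * n) :
    1 - (Real.exp (-n) + (Real.exp (-(ε / 2 * Real.log n)) + Real.exp (-Real.log n))) ≤
      gnpProb n p fun G => G.Connected ∧ AC G ≤ (960 / ε + 23) * Real.log n / p := by
  have hn0 : (0 : ℝ) < n := by by_contra! h; nlinarith
  have : Nonempty (Fin n) := Fin.pos_iff_nonempty.1 (by exact_mod_cast hn0)
  have hp0 : (0 : ℝ) < p :=
    pos_of_mul_pos_left ((mul_pos (by linarith) (by linarith)).trans_le hp) hn0.le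
  set x := Real.log n / p with hx
  have hx1 : 1 ≤ x := (one_le_div hp0).2 (p.2.2.trans hn1)
  have : 0 ≤ x := zero_le_one.trans hx1
  have hxp : x * p = Real.log n := div_mul_cancel₀ _ hp0.ne'
  set K := ⌈48 / ε * x⌉₊
  have hK : 48 / ε * x ≤ K := Nat.le_ceil _
  have hK' : K < 48 / ε * x + 1 := Nat.ceil_lt_add_one (by positivity)
  have hrounds : ((20 * K + 3 : ℕ) : ℝ) ≤ (960 / ε + 23) * Real.log n / p := by
    rw [mul_div_assoc, ← hx]
    push_cast
    have : 960 / ε * x = 20 * (48 / ε * x) := by ring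
    linarith
  have hfail := binomialRandom_real_not_acquaintableIn_le_exp (V := Fin n) (K := K)
    (Fintype.card_fin n) hε hε1 hn hlog hp <| by
      calc 3 * Real.log n
        _ = ε / 16 * p * (48 / ε * x) := by rw [← hxp]; field_simp; norm_num
        _ ≤ ε / 16 * p * K := by have := hp0.le; gcongr
  rw [gnpProb_eq_binomialRandom_real]
  calc _
    _ ≤ 1 - G(Fin n, p).real {G | ¬AcquaintableIn G (20 * K + 3)} := by gcongr
    _ = G(Fin n, p).real {G | AcquaintableIn G (20 * K + 3)} := by
      rw [← probReal_compl_eq_one_sub (.of_discrete), Set.compl_ofPred]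
      simp only [not_not]
    _ ≤ _ := measureReal_mono <| by
      exact fun G hG => ⟨hG.connected, (Nat.cast_le.2 hG.AC_le).trans hrounds⟩

theorem tendsto_one_sub_exp_add_exp_add_exp {ε : ℝ} (hε : 0 < ε) :
    Tendsto (fun n : ℕ => 1 - (Real.exp (-n) +
      (Real.exp (-(ε / 2 * Real.log n)) + Real.exp (-Real.log n)))) atTop (nhds 1) := by
  have hn : Tendsto (fun n : ℕ => (n : ℝ)) atTop atTop := tendsto_natCast_atTop_atTop
  have hlog : Tendsto (fun n : ℕ => Real.log n) atTop atTop := Real.tendsto_log_atTop.comp hn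
  have hexp := Real.tendsto_exp_neg_atTop_nhds_zero
  simpa using ((hexp.comp hn).add
    ((hexp.comp (hlog.const_mul_atTop (half_pos hε))).add (hexp.comp hlog))).const_sub 1

theorem eventually_one_sub_le_gnpProb {ε : ℝ} (hε : 0 < ε) (hε1 : ε ≤ 1) :
    ∀ᶠ n : ℕ in atTop, ∀ p : I, (1 + ε) * Real.log n ≤ p * n →
      1 - (Real.exp (-n) + (Real.exp (-(ε / 2 * Real.log n)) + Real.exp (-Real.log n))) ≤
        gnpProb n p fun G => G.Connected ∧ AC G ≤ (960 / ε + 23) * Real.log n / p := by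
  have hn : Tendsto (fun n : ℕ => (n : ℝ)) atTop atTop := tendsto_natCast_atTop_atTop
  have hlog : Tendsto (fun n : ℕ => Real.log n) atTop atTop := Real.tendsto_log_atTop.comp hn
  have hc : 0 < ε / 16 * (ε / 64) ^ 2 := by positivity
  filter_upwards [(hn.const_mul_atTop (by positivity : 0 < ε / 64)).eventually_ge_atTop 2,
    hlog.eventually_ge_atTop 1,
    (hlog.const_mul_atTop hc).eventually_ge_atTop (4 * (Real.log 4 + 1))] with n hn hn1 hlog p hp
  exact one_sub_le_gnpProb hε hε1 p hn hn1 hlog hp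

theorem AC_gnp_upper_general (ε : ℝ) (hε : 0 < ε) :
    ∃ C : ℝ, 0 < C ∧ ∀ p : ℕ → ℝ,
      (∀ᶠ n : ℕ in atTop, (1 + ε) * Real.log n / n ≤ p n ∧ p n ≤ 1) →
      Tendsto
        (fun n : ℕ => gnpProb n (p n) (fun G : SimpleGraph (Fin n) =>
          G.Connected ∧ (AC G : ℝ) ≤ C * Real.log n / p n))
        atTop (nhds 1) := by
  obtain ⟨δ, hδ, hδ1, hδε⟩ : ∃ δ : ℝ, 0 < δ ∧ δ ≤ 1 ∧ δ ≤ ε :=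
    ⟨min ε 1, by positivity, min_le_right _ _, min_le_left _ _⟩
  refine ⟨960 / δ + 23, by positivity, fun p hp => ?_⟩
  refine tendsto_of_tendsto_of_tendsto_of_le_of_le' (tendsto_one_sub_exp_add_exp_add_exp hδ)
    tendsto_const_nhds ?_ ?_
  all_goals
    filter_upwards [hp, eventually_one_sub_le_gnpProb hδ hδ1, eventually_gt_atTop 0]
      with n ⟨hlow, hp1⟩ hprob hn
    have hn0 : (0 : ℝ) < n := by exact_mod_cast hn
    have : 0 ≤ Real.log n := Real.log_natCast_nonneg n
    have hp0 : 0 ≤ p n := le_trans (by positivity) hlow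
  · refine hprob ⟨p n, hp0, hp1⟩ (le_trans ?_ ((div_le_iff₀ hn0).1 hlow))
    gcongr
  · rw [gnpProb_eq_binomialRandom_real n ⟨p n, hp0, hp1⟩]
    exact measureReal_le_one

end Asymptotics

/-- For every `ε > 0` there is a constant `C > 0` such that: whenever
`(1+ε) log n / n ≤ p(n) ≤ 1 − ε` for all `n`, a.a.s. `G ∈ G(n, p(n))` is connected and
satisfies `AC(G) ≤ C log n / p(n)`. -/
theorem AC_gnp_upper (ε : ℝ) (hε : 0 < ε) :
    ∃ C : ℝ, 0 < C ∧ ∀ p : ℕ → ℝ,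
      (∀ n : ℕ, (1 + ε) * Real.log n / n ≤ p n ∧ p n ≤ 1 - ε) →
      Filter.Tendsto
        (fun n : ℕ => gnpProb n (p n) (fun G : SimpleGraph (Fin n) =>
          G.Connected ∧ (AC G : ℝ) ≤ C * Real.log n / p n))
        Filter.atTop (nhds 1) := by
  obtain ⟨C, hC, h⟩ := AC_gnp_upper_general ε hε
  exact ⟨C, hC, fun p hp => h p (.of_forall fun n => ⟨(hp n).1, (hp n).2.trans (by linarith)⟩)⟩
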